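/- arXiv:2508.17479 — 2 statements merged into one kernel-verified Lean document; each statement's English description precedes it below -/
import Mathlib

section
/- Let M ≥ 1 and X ≥ 1 be integers, let N = M + 2X, and let α_i = ω_N^i for i ∈ {1, …, N}. Let A_j ∈ ℂ^{t×p} and B_j ∈ ℂ^{p×r} for j ∈ {1, …, M}, and let R_j ∈ ℂ^{t×p} and S_j ∈ ℂ^{p×r} for j ∈ {1, …, X} be arbitrary matrices. Define the matrix-valued Laurent polynomial functions f(z) = Σ_{j=1}^{M} A_j z^{j−1} + Σ_{j=1}^{X} R_j z^{M+j−1} and g(z) = Σ_{j=1}^{M} B_j z^{−(j−1)} + Σ_{j=1}^{X} S_j z^{j} for z ∈ ℂ \ {0}. Then (1/N) Σ_{i=1}^{N} f(α_i) g(α_i) = Σ_{j=1}^{M} A_j B_j. -/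
theorem dft_root_sum (N : ℕ) (hN0 : N ≠ 0) (α : Fin N → ℂ)
    (hα : ∀ i : Fin N, α i = Complex.exp (2 * Real.pi * Complex.I / N) ^ ((i : ℕ) + 1))
    (l : ℤ) (hl : |l| < N) : ∑ i, α i ^ l = if l = 0 then (N : ℂ) else 0 := by
  have hp := Complex.isPrimitiveRoot_exp N hN0
  set w := Complex.exp (2 * Real.pi * Complex.I / N) with hw
  split_ifs with h
  · simp [h]
  · have h1 : w ^ l ≠ 1 := by
      intro e
      rw [hp.zpow_eq_one_iff_dvd] at e
      exact h (Int.eq_zero_of_abs_lt_dvd e hl)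
    have h2 : ∀ i : Fin N, α i ^ l = w ^ l * (w ^ l) ^ (i : ℕ) := by
      intro i
      rw [hα, ← pow_succ', ← zpow_natCast, ← zpow_natCast, ← zpow_mul, ← zpow_mul, mul_comm]
    simp_rw [h2]
    rw [← Finset.mul_sum, Fin.sum_univ_eq_sum_range (fun i => (w ^ l) ^ i), geom_sum_eq h1,
      ← zpow_natCast, ← zpow_mul, mul_comm l, zpow_mul, zpow_natCast, hp.pow_eq_one]
    simp

/-- Decoding correctness of the complex DFT SDMM scheme with inner partitioning parameter `M`
and security parameter `X`: with `N = M + 2X` and `α i = ω_N^i` ranging over all `N`-th roots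
of unity, `(1/N) Σ_i f(α i) g(α i) = Σ_j A j * B j`. -/
theorem complex_dft_scheme_decoding (M X : ℕ) (hM : 1 ≤ M) (hX : 1 ≤ X)
    (N : ℕ) (hN : N = M + 2 * X) (t p r : ℕ)
    (A : Fin M → Matrix (Fin t) (Fin p) ℂ) (B : Fin M → Matrix (Fin p) (Fin r) ℂ)
    (R : Fin X → Matrix (Fin t) (Fin p) ℂ) (S : Fin X → Matrix (Fin p) (Fin r) ℂ)
    (α : Fin N → ℂ)
    (hα : ∀ i : Fin N, α i = Complex.exp (2 * Real.pi * Complex.I / N) ^ ((i : ℕ) + 1))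
    (f : ℂ → Matrix (Fin t) (Fin p) ℂ) (g : ℂ → Matrix (Fin p) (Fin r) ℂ)
    (hf : ∀ z : ℂ, z ≠ 0 →
      f z = ∑ j : Fin M, z ^ (j : ℕ) • A j + ∑ j : Fin X, z ^ (M + (j : ℕ)) • R j)
    (hg : ∀ z : ℂ, z ≠ 0 →
      g z = ∑ j : Fin M, z ^ (-((j : ℕ) : ℤ)) • B j + ∑ j : Fin X, z ^ ((j : ℕ) + 1) • S j) :
    ((1 : ℂ) / N) • ∑ i : Fin N, f (α i) * g (α i) = ∑ j : Fin M, A j * B j := by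
  have hN0 : N ≠ 0 := by omega
  have hNc : (N : ℂ) ≠ 0 := by exact_mod_cast hN0
  have hz : ∀ i, α i ≠ 0 := fun i => by
    rw [hα]; exact pow_ne_zero _ (Complex.exp_ne_zero _)
  have hs := fun l h => dft_root_sum N hN0 α hα l h
  let F : Fin M ⊕ Fin X → Matrix (Fin t) (Fin p) ℂ := Sum.elim A R
  let G : Fin M ⊕ Fin X → Matrix (Fin p) (Fin r) ℂ := Sum.elim B S
  let u : Fin M ⊕ Fin X → ℤ := Sum.elim (fun j => (j : ℕ)) (fun j => ((M + (j : ℕ) : ℕ) : ℤ))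
  let v : Fin M ⊕ Fin X → ℤ := Sum.elim (fun j => -((j : ℕ) : ℤ)) (fun j => (((j : ℕ) + 1 : ℕ) : ℤ))
  have hf' : ∀ z : ℂ, z ≠ 0 → f z = ∑ a, z ^ (u a) • F a := by
    intro z h
    rw [hf z h, Fintype.sum_sum_type]
    simp only [u, F, Sum.elim_inl, Sum.elim_inr, zpow_natCast]
  have hg' : ∀ z : ℂ, z ≠ 0 → g z = ∑ a, z ^ (v a) • G a := by
    intro z h
    rw [hg z h, Fintype.sum_sum_type]
    simp only [v, G, Sum.elim_inl, Sum.elim_inr, zpow_natCast]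
  have key : ∑ i : Fin N, f (α i) * g (α i)
      = ∑ a, ∑ b, (∑ i, α i ^ (u a + v b)) • (F a * G b) := by
    simp_rw [Finset.sum_smul]
    have : ∀ i, f (α i) * g (α i) = ∑ a, ∑ b, α i ^ (u a + v b) • (F a * G b) := by
      intro i
      rw [hf' _ (hz i), hg' _ (hz i), Matrix.sum_mul]
      refine Finset.sum_congr rfl fun a _ => ?_
      rw [Matrix.mul_sum]
      refine Finset.sum_congr rfl fun b _ => ?_
      rw [Matrix.smul_mul, Matrix.mul_smul, smul_smul, zpow_add₀ (hz i)]
    simp_rw [this]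
    rw [Finset.sum_comm]
    refine Finset.sum_congr rfl fun a _ => ?_
    rw [Finset.sum_comm]
  have key2 : ∀ a b, ∑ i, α i ^ (u a + v b) = if u a + v b = 0 then (N : ℂ) else 0 := by
    intro a b
    apply hs
    rw [abs_lt]
    rcases a with a | a <;> rcases b with b | b <;>
      simp only [u, v, Sum.elim_inl, Sum.elim_inr] <;> omega
  have key3 : ∑ i : Fin N, f (α i) * g (α i) = ∑ j : Fin M, (N : ℂ) • (A j * B j) := by
    rw [key]
    simp_rw [key2]
    have e1 : ∀ a b : Fin M, u (.inl a) + v (.inl b) = 0 ↔ a = b := by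
      intro a b; simp only [u, v, Sum.elim_inl, Fin.ext_iff]; omega
    have e2 : ∀ (a : Fin M) (b : Fin X), u (.inl a) + v (.inr b) ≠ 0 := by
      intro a b; simp only [u, v, Sum.elim_inl, Sum.elim_inr]; omega
    have e3 : ∀ (a : Fin X) (b : Fin M), u (.inr a) + v (.inl b) ≠ 0 := by
      intro a b; simp only [u, v, Sum.elim_inl, Sum.elim_inr]; omega
    have e4 : ∀ (a : Fin X) (b : Fin X), u (.inr a) + v (.inr b) ≠ 0 := by
      intro a b; simp only [u, v, Sum.elim_inr]; omega
    simp only [Fintype.sum_sum_type, e1, e2, e3, e4, if_false, zero_smul, Finset.sum_const_zero,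
      add_zero, ite_smul, Finset.sum_ite_eq, Finset.mem_univ, if_true, F, G, Sum.elim_inl]
  rw [key3, ← Finset.smul_sum, smul_smul, one_div, inv_mul_cancel₀ hNc, one_smul]
end

section
/- Let M ≥ 1 and X ≥ 1 be integers, let N = M + 2X, and let α_i = ω_N^i for i ∈ {1, …, N}. Let A'_j ∈ ℂ^{t×p} and B'_j ∈ ℂ^{p×r} for j ∈ {1, …, M}, and let R'_j ∈ ℂ^{t×p} and S'_j ∈ ℂ^{p×r} for j ∈ {1, …, X} be arbitrary matrices. Define f(z) = Σ_{j=1}^{M} A'_j z^{j−1} + Σ_{j=1}^{X} R'_j z^{M+j−1} and g(z) = Σ_{j=1}^{M} B'_j z^{−(j−1)} + Σ_{j=1}^{X} S'_j z^{j} for z ∈ ℂ \ {0}. Then (1/N) Σ_{i=1}^{N} Re(f(α_i) g(α_i)) = Re(Σ_{j=1}^{M} A'_j B'_j), where Re is applied entrywise. -/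
theorem aux_sum_zero (N : ℕ) (hN0 : N ≠ 0) (α : Fin N → ℂ)
    (hα : ∀ i : Fin N, α i = Complex.exp (2 * Real.pi * Complex.I / N) ^ ((i : ℕ) + 1))
    (e : ℤ) (he : e ≠ 0) (h1 : -(N : ℤ) < e) (h2 : e < N) : ∑ i, α i ^ e = 0 := by
  have hp := Complex.isPrimitiveRoot_exp N hN0
  set ζ := Complex.exp (2 * Real.pi * Complex.I / N) with hζ
  have hne : ζ ^ e ≠ 1 := by
    intro h
    have hd := (hp.zpow_eq_one_iff_dvd e).1 h
    exact he (Int.eq_zero_of_abs_lt_dvd hd (abs_lt.2 ⟨h1, h2⟩))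
  have hpow : (ζ ^ e) ^ N = 1 := by
    rw [← zpow_natCast, ← zpow_mul, mul_comm, zpow_mul, zpow_natCast, hp.pow_eq_one, one_zpow]
  have : ∀ i : Fin N, α i ^ e = ζ ^ e * (ζ ^ e) ^ (i : ℕ) := by
    intro i
    rw [hα, ← pow_succ', ← zpow_natCast, ← zpow_mul, mul_comm, zpow_mul, zpow_natCast]
  rw [Finset.sum_congr rfl (fun i _ => this i), ← Finset.mul_sum,
    Fin.sum_univ_eq_sum_range (fun i => (ζ ^ e) ^ i), geom_sum_eq hne, hpow]
  simp

theorem aux_prod {ι κ : Type*} [Fintype ι] [Fintype κ] {N t p r : ℕ} (α : Fin N → ℂ)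
    (hα : ∀ i, α i ≠ 0) (a : ι → ℤ) (b : κ → ℤ)
    (F : ι → Matrix (Fin t) (Fin p) ℂ) (G : κ → Matrix (Fin p) (Fin r) ℂ) :
    ∑ i, (∑ s, α i ^ a s • F s) * (∑ u, α i ^ b u • G u)
      = ∑ s, ∑ u, (∑ i, α i ^ (a s + b u)) • (F s * G u) := by
  simp_rw [Matrix.sum_mul, Matrix.mul_sum, Finset.sum_smul]
  rw [Finset.sum_comm]
  refine Finset.sum_congr rfl fun s _ => ?_
  rw [Finset.sum_comm]
  refine Finset.sum_congr rfl fun u _ => Finset.sum_congr rfl fun i _ => ?_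
  rw [Matrix.smul_mul, Matrix.mul_smul, smul_smul, zpow_add₀ (hα i)]

/-- Decoding correctness of the real DFT SDMM scheme: with `N = M + 2X` and `α i = ω_N^i`
ranging over all `N`-th roots of unity,
`(1/N) Σ_i Re(f(α i) g(α i)) = Re(Σ_j A' j * B' j)` (entrywise real parts). -/
theorem real_dft_scheme_decoding (M X : ℕ) (hM : 1 ≤ M) (hX : 1 ≤ X)
    (N : ℕ) (hN : N = M + 2 * X) (t p r : ℕ)
    (A' : Fin M → Matrix (Fin t) (Fin p) ℂ) (B' : Fin M → Matrix (Fin p) (Fin r) ℂ)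
    (R' : Fin X → Matrix (Fin t) (Fin p) ℂ) (S' : Fin X → Matrix (Fin p) (Fin r) ℂ)
    (α : Fin N → ℂ)
    (hα : ∀ i : Fin N, α i = Complex.exp (2 * Real.pi * Complex.I / N) ^ ((i : ℕ) + 1))
    (f : ℂ → Matrix (Fin t) (Fin p) ℂ) (g : ℂ → Matrix (Fin p) (Fin r) ℂ)
    (hf : ∀ z : ℂ, z ≠ 0 →
      f z = ∑ j : Fin M, z ^ (j : ℕ) • A' j + ∑ j : Fin X, z ^ (M + (j : ℕ)) • R' j)
    (hg : ∀ z : ℂ, z ≠ 0 →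
      g z = ∑ j : Fin M, z ^ (-((j : ℕ) : ℤ)) • B' j + ∑ j : Fin X, z ^ ((j : ℕ) + 1) • S' j) :
    ((1 : ℝ) / N) • ∑ i : Fin N, (f (α i) * g (α i)).map Complex.re =
      (∑ j : Fin M, A' j * B' j).map Complex.re := by
  have hN0 : N ≠ 0 := by omega
  have hne : ∀ i, α i ≠ 0 := fun i => by
    rw [hα]; exact pow_ne_zero _ (Complex.exp_ne_zero _)
  have hz := aux_sum_zero N hN0 α hα
  have hf' : ∀ i, f (α i) = ∑ s : Fin M ⊕ Fin X,
      α i ^ (Sum.elim (fun j : Fin M => ((j : ℕ) : ℤ)) (fun j : Fin X => ((M + (j : ℕ) : ℕ) : ℤ)) s)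
        • Sum.elim A' R' s := fun i => by
    rw [hf _ (hne i), Fintype.sum_sum_type]
    simp only [Sum.elim_inl, Sum.elim_inr, zpow_natCast]
  have hg' : ∀ i, g (α i) = ∑ s : Fin M ⊕ Fin X,
      α i ^ (Sum.elim (fun j : Fin M => -((j : ℕ) : ℤ)) (fun j : Fin X => (((j : ℕ) + 1 : ℕ) : ℤ)) s)
        • Sum.elim B' S' s := fun i => by
    rw [hg _ (hne i), Fintype.sum_sum_type]
    simp only [Sum.elim_inl, Sum.elim_inr, zpow_natCast]
  have key : ∑ i, f (α i) * g (α i) = (N : ℂ) • ∑ j : Fin M, A' j * B' j := by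
    simp_rw [hf', hg']
    rw [aux_prod α hne, Fintype.sum_sum_type, Finset.smul_sum]
    simp_rw [Fintype.sum_sum_type, Sum.elim_inl, Sum.elim_inr]
    have e1 : ∀ (x : Fin M) (y : Fin X),
        ∑ i, α i ^ (((x : ℕ) : ℤ) + (((y : ℕ) + 1 : ℕ) : ℤ)) = 0 := fun x y =>
      hz _ (by omega) (by omega) (by omega)
    have e2 : ∀ (x : Fin X) (y : Fin M),
        ∑ i, α i ^ (((M + (x : ℕ) : ℕ) : ℤ) + -((y : ℕ) : ℤ)) = 0 := fun x y =>
      hz _ (by omega) (by omega) (by omega)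
    have e3 : ∀ (x : Fin X) (y : Fin X),
        ∑ i, α i ^ (((M + (x : ℕ) : ℕ) : ℤ) + (((y : ℕ) + 1 : ℕ) : ℤ)) = 0 := fun x y =>
      hz _ (by omega) (by omega) (by omega)
    simp only [e1, e2, e3, zero_smul, Finset.sum_const_zero, add_zero]
    refine Finset.sum_congr rfl fun x _ => ?_
    rw [Finset.sum_eq_single x]
    · simp
    · intro y _ hy
      have : (y : ℕ) ≠ x := fun h => hy (Fin.ext h)
      rw [hz _ (by omega) (by omega) (by omega), zero_smul]
    · simp
  ext a b
  have k := congrArg Complex.re (congrFun (congrFun key a) b)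
  have hNR : (N : ℝ) ≠ 0 := by exact_mod_cast hN0
  rw [Matrix.sum_apply, Complex.re_sum, Matrix.smul_apply, smul_eq_mul,
    ← Complex.ofReal_natCast, Complex.re_ofReal_mul] at k
  rw [Matrix.smul_apply, Matrix.sum_apply]
  simp only [Matrix.map_apply]
  rw [k, smul_eq_mul]
  field_simp
end
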